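/- Let n ≥ 2, 1 ≤ s < ∞, let Ω ⊆ ℝⁿ be a domain, let T = T_{l,r,c} be an essential tube for Ω with corresponding component Ω_T, and let z₀ ∈ Ω be any point not in Ω_T. Then ∫_{Ω_T} k(z, z₀; Ω)^s dz ≥ (V_{n−1} / ((s+1)·2^{s+1})) · c · rⁿ · (l/r)^{s+1}, where V_{n−1} is the Lebesgue measure of the unit ball in ℝ^{n−1}. -/

import Mathlib

open MeasureTheory Metric Set
open scoped ENNReal

/-- The quasihyperbolic distance `k(z, z₀; Ω)`: the infimum, over all Lipschitz curves
`γ : [0,1] → Ω` joining `z` to `z₀`, of `∫ ‖γ'(t)‖ / d(γ(t), ∂Ω) dt`. -/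
noncomputable def qhDist {n : ℕ} (Ω : Set (EuclideanSpace ℝ (Fin n)))
    (z z₀ : EuclideanSpace ℝ (Fin n)) : ℝ :=
  sInf {L : ℝ | ∃ γ : ℝ → EuclideanSpace ℝ (Fin n),
    (∃ K : NNReal, LipschitzWith K γ) ∧ γ 0 = z ∧ γ 1 = z₀ ∧
    (∀ t ∈ Set.Icc (0:ℝ) 1, γ t ∈ Ω) ∧
    L = ∫ t in (0:ℝ)..1, ‖deriv γ t‖ / Metric.infDist (γ t) (frontier Ω)}

/-- The distance of `z` from the first coordinate axis. -/
noncomputable def radial {n : ℕ} [NeZero n] (z : EuclideanSpace ℝ (Fin n)) : ℝ :=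
  Real.sqrt (∑ i ∈ Finset.univ.erase (0 : Fin n), z i ^ 2)

/-- The standard cylinder `[0, l] × D_r^{n-1}` in `ℝⁿ`, the first coordinate being the axis. -/
def stdCylinder {n : ℕ} [NeZero n] (l r : ℝ) : Set (EuclideanSpace ℝ (Fin n)) :=
  {z | z 0 ∈ Set.Icc (0:ℝ) l ∧ radial z ≤ r}

/-- The wall `[0, l] × ∂D_r^{n-1}` of the standard cylinder. -/
def stdWall {n : ℕ} [NeZero n] (l r : ℝ) : Set (EuclideanSpace ℝ (Fin n)) :=
  {z | z 0 ∈ Set.Icc (0:ℝ) l ∧ radial z = r}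

/-- The `t`-th slice `{t} × D_r^{n-1}` of the standard cylinder. -/
def stdSlice {n : ℕ} [NeZero n] (r t : ℝ) : Set (EuclideanSpace ℝ (Fin n)) :=
  {z | z 0 = t ∧ radial z ≤ r}

/-- `T = φ '' stdCylinder l r` is an essential tube for `Ω` with parameters `l, r, c` and
corresponding component `ΩT`: `ΩT` is a connected component of `T ∩ Ω` missing the wall of `T`,
and each slice of `ΩT` has `(n-1)`-dimensional (Hausdorff) measure at least `c` times that of
the corresponding slice of the tube (an isometric copy of `D_r^{n-1}`). -/
structure IsEssentialTube {n : ℕ} [NeZero n] (Ω : Set (EuclideanSpace ℝ (Fin n)))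
    (φ : EuclideanSpace ℝ (Fin n) ≃ᵢ EuclideanSpace ℝ (Fin n))
    (l r c : ℝ) (ΩT : Set (EuclideanSpace ℝ (Fin n))) : Prop where
  l_pos : 0 < l
  r_pos : 0 < r
  c_pos : 0 < c
  isComp : ∃ p ∈ (φ '' stdCylinder l r) ∩ Ω,
    ΩT = connectedComponentIn ((φ '' stdCylinder l r) ∩ Ω) p
  wall_disjoint : ΩT ∩ (φ '' stdWall l r) = ∅
  slice_meas : ∀ t ∈ Set.Icc (0:ℝ) l,
    ENNReal.ofReal c * μH[(n:ℝ) - 1] (φ '' stdSlice r t) ≤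
      μH[(n:ℝ) - 1] (ΩT ∩ φ '' stdSlice r t)

/-!
A point of `Ω_T` lies within `r` of `∂Ω`: the disk around it, in its slice, that touches the wall
cannot be contained in `Ω`, since otherwise `Ω_T` would reach the wall. Hence the quasihyperbolic
length of a curve is at least `1 / r` times its Euclidean length as long as it stays in `Ω_T`.
Missing the wall, `Ω_T` can only be left through an end of the tube, so a point with axial
coordinate `t` satisfies `k(z, z₀; Ω) ≥ min(t, l - t) / r`. Integrating the `s`-th power of this
bound slice by slice, each slice having measure at least `c V_{n-1} r^{n-1}`, gives the theorem; the
contributions of `t ≤ l / 2` and `t ≥ l / 2` are equal, whence the additional factor `2`.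
-/

section LipschitzCurves

/-- `x` and `y` are joined by a Lipschitz curve inside `F`: the analogue of `JoinedIn` for the
curves admissible in `qhDist`. As there, the curve is defined on all of `ℝ`, and only its
restriction to `[0, 1]` has to lie in `F`. -/
def LipschitzJoinedIn {X : Type*} [PseudoEMetricSpace X] (F : Set X) (x y : X) : Prop :=
  ∃ γ : ℝ → X, (∃ K : NNReal, LipschitzWith K γ) ∧ γ 0 = x ∧ γ 1 = y ∧
    ∀ t ∈ Icc (0 : ℝ) 1, γ t ∈ F

lemma LipschitzJoinedIn.symm {X : Type*} [PseudoEMetricSpace X] {F : Set X} {x y : X}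
    (h : LipschitzJoinedIn F x y) : LipschitzJoinedIn F y x := by
  obtain ⟨γ, ⟨K, hK⟩, h0, h1, hF⟩ := h
  exact ⟨fun t => γ (1 - t), ⟨_, hK.comp ((LipschitzWith.const 1).sub LipschitzWith.id)⟩,
    by simpa, by simpa, fun t ht => hF _ ⟨by linarith [ht.2], by linarith [ht.1]⟩⟩

lemma LipschitzJoinedIn.trans {E : Type*} [SeminormedAddCommGroup E] {F : Set E} {x y z : E}
    (hxy : LipschitzJoinedIn F x y) (hyz : LipschitzJoinedIn F y z) : LipschitzJoinedIn F x z := by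
  obtain ⟨γ, ⟨K, hK⟩, γ0, γ1, hγ⟩ := hxy
  obtain ⟨δ, ⟨L, hL⟩, δ0, δ1, hδ⟩ := hyz
  have htwo : LipschitzWith _ (fun t : ℝ => 2 * t) := lipschitzWith_smul (2 : ℝ)
  -- Each curve rests at `y` while the other one runs, so the sum minus `y` is the concatenation.
  refine ⟨fun t => γ (min 1 (2 * t)) + δ (max 0 (2 * t - 1)) - y,
    ⟨_, ((hK.comp (htwo.const_min 1)).add
      (hL.comp ((htwo.sub (LipschitzWith.const 1)).const_max 0))).sub (LipschitzWith.const y)⟩,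
    by simp [γ0, δ0], by norm_num [γ1, δ1], fun t ht => ?_⟩
  beta_reduce
  rcases le_total (2 * t) 1 with h | h
  · rw [min_eq_right h, max_eq_left (by linarith), δ0, add_sub_cancel_right]
    exact hγ _ ⟨by linarith [ht.1], h⟩
  · rw [min_eq_left h, max_eq_right (by linarith), γ1, add_sub_cancel_left]
    exact hδ _ ⟨by linarith, by linarith [ht.2]⟩

lemma lipschitzJoinedIn_of_isOpen_of_isPreconnected {E : Type*} [SeminormedAddCommGroup E]
    [NormedSpace ℝ E] {Ω : Set E} (hΩ : IsOpen Ω) (hconn : IsPreconnected Ω) {x y : E}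
    (hx : x ∈ Ω) (hy : y ∈ Ω) : LipschitzJoinedIn Ω x y := by
  refine hconn.induction₂ (LipschitzJoinedIn Ω) (fun x hx => ?_)
    (fun _ _ _ _ _ _ => LipschitzJoinedIn.trans) (fun _ _ _ _ => LipschitzJoinedIn.symm) hx hy
  obtain ⟨ε, hε, hball⟩ := Metric.isOpen_iff.1 hΩ x hx
  filter_upwards [mem_nhdsWithin_of_mem_nhds (ball_mem_nhds x hε)] with y hy
  exact ⟨AffineMap.lineMap x y, ⟨_, lipschitzWith_lineMap x y⟩, by simp, by simp,
    fun t ht => hball ((convex_ball x ε).lineMap_mem (mem_ball_self hε) hy ht)⟩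

variable {E : Type*} [NormedAddCommGroup E] [NormedSpace ℝ E] [FiniteDimensional ℝ E] {γ : ℝ → E}
  {K : NNReal}

lemma intervalIntegrable_norm_deriv_of_lipschitzWith (hγ : LipschitzWith K γ) (a b : ℝ) :
    IntervalIntegrable (fun t => ‖deriv γ t‖) volume a b := by
  borelize E
  refine (intervalIntegrable_const (c := (K : ℝ))).mono_fun
    (measurable_deriv γ).norm.aestronglyMeasurable (.of_forall fun t => ?_)
  simpa using norm_deriv_le_of_lipschitz hγ

-- The fundamental theorem of calculus is applied to `g ∘ γ`, for `g` a norming functional of the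
-- chord.
lemma dist_le_integral_norm_deriv_of_lipschitzWith (hγ : LipschitzWith K γ) {a b : ℝ}
    (hab : a ≤ b) : dist (γ a) (γ b) ≤ ∫ t in a..b, ‖deriv γ t‖ := by
  obtain ⟨g, hg, hgw⟩ := exists_dual_vector'' ℝ (γ b - γ a)
  have hac : AbsolutelyContinuousOnInterval (fun t => g (γ t)) a b :=
    (g.lipschitz.comp hγ).lipschitzOnWith.absolutelyContinuousOnInterval
  calc dist (γ a) (γ b) = g (γ b) - g (γ a) := by
        rw [dist_comm, dist_eq_norm, ← map_sub, hgw, RCLike.ofReal_real_eq_id, id]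
    _ = ∫ t in a..b, deriv (fun t => g (γ t)) t := hac.integral_deriv_eq_sub.symm
    _ ≤ ∫ t in a..b, ‖deriv γ t‖ := by
        refine intervalIntegral.integral_mono_ae hab hac.intervalIntegrable_deriv
          (intervalIntegrable_norm_deriv_of_lipschitzWith hγ a b) ?_
        filter_upwards [hγ.ae_differentiableAt_real] with t ht
        rw [show deriv (fun t => g (γ t)) t = g (deriv γ t) from
          (g.hasFDerivAt.comp_hasDerivAt t ht.hasDerivAt).deriv]
        exact (le_abs_self _).trans ((g.le_of_opNorm_le hg _).trans_eq (one_mul _))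

lemma dist_div_le_integral_norm_deriv_div (hγ : LipschitzWith K γ) {ρ : ℝ → ℝ} {a b τ r : ℝ}
    (hτ : τ ∈ Icc a b) (hρ : ContinuousOn ρ (Icc a b)) (hρ_pos : ∀ t ∈ Icc a b, 0 < ρ t)
    (hρ_le : ∀ t ∈ Icc a τ, ρ t ≤ r) :
    dist (γ a) (γ τ) / r ≤ ∫ t in a..b, ‖deriv γ t‖ / ρ t := by
  have hab : a ≤ b := hτ.1.trans hτ.2
  have hr : 0 < r := (hρ_pos a ⟨le_rfl, hab⟩).trans_le (hρ_le a ⟨le_rfl, hτ.1⟩)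
  have hint : IntervalIntegrable (fun t => ‖deriv γ t‖ / ρ t) volume a b := by
    simp only [div_eq_mul_inv]
    refine (intervalIntegrable_norm_deriv_of_lipschitzWith hγ a b).mul_continuousOn ?_
    rw [uIcc_of_le hab]
    exact hρ.inv₀ fun t ht => (hρ_pos t ht).ne'
  have hintτ : IntervalIntegrable (fun t => ‖deriv γ t‖ / ρ t) volume a τ :=
    hint.mono_set (by rw [uIcc_of_le hτ.1, uIcc_of_le hab]; exact Icc_subset_Icc_right hτ.2)
  calc dist (γ a) (γ τ) / r
      ≤ (∫ t in a..τ, ‖deriv γ t‖) / r := by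
        gcongr; exact dist_le_integral_norm_deriv_of_lipschitzWith hγ hτ.1
    _ = ∫ t in a..τ, ‖deriv γ t‖ / r := (intervalIntegral.integral_div _ _).symm
    _ ≤ ∫ t in a..τ, ‖deriv γ t‖ / ρ t :=
        intervalIntegral.integral_mono_on hτ.1
          ((intervalIntegrable_norm_deriv_of_lipschitzWith hγ a τ).div_const r) hintτ fun t ht =>
            div_le_div_of_nonneg_left (norm_nonneg _) (hρ_pos t ⟨ht.1, ht.2.trans hτ.2⟩)
              (hρ_le t ht)
    _ ≤ ∫ t in a..b, ‖deriv γ t‖ / ρ t := by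
        refine intervalIntegral.integral_mono_interval le_rfl hτ.1 hτ.2 ?_ hint
        filter_upwards [ae_restrict_mem measurableSet_Ioc] with t ht
        exact div_nonneg (norm_nonneg _) (hρ_pos t (Ioc_subset_Icc_self ht)).le

end LipschitzCurves

section FirstExit

variable {α X : Type*} [ConditionallyCompleteLinearOrder α] [DenselyOrdered α] [TopologicalSpace α]
  [OrderTopology α] [TopologicalSpace X]

lemma exists_first_exit {G : Set X} (hG : IsOpen G) {γ : α → X} {a b : α}
    (hγ : ContinuousOn γ (Icc a b)) (hab : a ≤ b) (ha : γ a ∈ G) (hb : γ b ∉ G) :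
    ∃ τ ∈ Icc a b, γ τ ∈ frontier G ∧ ∀ t ∈ Ico a τ, γ t ∈ G := by
  have hclosed : IsClosed (Icc a b ∩ γ ⁻¹' Gᶜ) :=
    hγ.preimage_isClosed_of_isClosed isClosed_Icc hG.isClosed_compl
  obtain ⟨τ, ⟨hτ, hτG⟩, hleast⟩ :=
    (isCompact_Icc.of_isClosed_subset hclosed inter_subset_left).exists_isLeast
      ⟨b, ⟨hab, le_rfl⟩, hb⟩
  have hbefore : ∀ t ∈ Ico a τ, γ t ∈ G := fun t ht => by
    by_contra htG
    exact (hleast ⟨⟨ht.1, ht.2.le.trans hτ.2⟩, htG⟩).not_gt ht.2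
  have haτ : a ≠ τ := fun h => hτG (h ▸ ha)
  have hτ_closure : τ ∈ closure (Ico a τ) := by
    rw [closure_Ico haτ]
    exact ⟨hτ.1, le_rfl⟩
  refine ⟨τ, hτ, ?_, hbefore⟩
  rw [hG.frontier_eq]
  refine ⟨?_, hτG⟩
  exact ((hγ τ hτ).mono fun t ht => ⟨ht.1, ht.2.le.trans hτ.2⟩).mem_closure hτ_closure hbefore

end FirstExit

section Components

variable {X : Type*} [TopologicalSpace X] {F U : Set X} {x : X}

lemma closure_connectedComponentIn_inter :
    closure (connectedComponentIn F x) ∩ F = connectedComponentIn F x := by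
  refine Subset.antisymm (fun y hy => ?_)
    (subset_inter subset_closure (connectedComponentIn_subset F x))
  obtain ⟨z, hz⟩ := closure_nonempty_iff.1 ⟨y, hy.1⟩
  rw [connectedComponentIn_eq hz] at hy ⊢
  have hconn : IsPreconnected (closure (connectedComponentIn F z) ∩ F) :=
    isPreconnected_connectedComponentIn.subset_closure
      (subset_inter subset_closure (connectedComponentIn_subset F z)) inter_subset_left
  have hzF : z ∈ F := connectedComponentIn_subset F x hz
  exact hconn.subset_connectedComponentIn
    ⟨subset_closure (mem_connectedComponentIn hzF), hzF⟩ inter_subset_right hy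

lemma isOpen_connectedComponentIn_inter [LocallyConnectedSpace X] (hU : IsOpen U) (hUF : U ⊆ F) :
    IsOpen (connectedComponentIn F x ∩ U) := by
  refine isOpen_iff_mem_nhds.2 fun y ⟨hyF, hyU⟩ => ?_
  refine Filter.mem_of_superset (connectedComponentIn_mem_nhds (hU.mem_nhds hyU))
    (subset_inter ?_ (connectedComponentIn_subset U y))
  rw [connectedComponentIn_eq hyF]
  exact connectedComponentIn_mono y hUF

end Components

lemma two_mul_setLIntegral_Icc_half (f : ℝ → ℝ≥0∞) {l : ℝ} (hl : 0 ≤ l) :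
    2 * ∫⁻ t in Icc 0 (l / 2), f t = ∫⁻ t in Icc 0 l, f (min t (l - t)) := by
  have hunion : Icc 0 (l / 2) ∪ Ioc (l / 2) l = Icc 0 l :=
    Icc_union_Ioc_eq_Icc (by linarith) (by linarith)
  have hdisj : Disjoint (Icc 0 (l / 2)) (Ioc (l / 2) l) :=
    disjoint_left.2 fun t ht ht' => ht.2.not_gt ht'.1
  have hleft : ∫⁻ t in Icc 0 (l / 2), f (min t (l - t)) = ∫⁻ t in Icc 0 (l / 2), f t :=
    setLIntegral_congr_fun measurableSet_Icc fun t ht => by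
      simp only [min_eq_left (show t ≤ l - t by linarith [ht.2])]
  have hright : ∫⁻ t in Ioc (l / 2) l, f (min t (l - t)) = ∫⁻ t in Icc 0 (l / 2), f t := by
    calc ∫⁻ t in Ioc (l / 2) l, f (min t (l - t))
        = ∫⁻ t in Ioc (l / 2) l, f (l - t) :=
          setLIntegral_congr_fun measurableSet_Ioc fun t ht => by
            simp only [min_eq_right (show l - t ≤ t by linarith [ht.1])]
      _ = ∫⁻ t in (l - ·) ⁻¹' Ico 0 (l / 2), f (l - t) := by
          rw [preimage_const_sub_Ico, sub_zero, sub_half]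
      _ = ∫⁻ t in Ico 0 (l / 2), f t :=
          (volume.measurePreserving_sub_left l).setLIntegral_comp_preimage_emb
            (MeasurableEquiv.subLeft l).measurableEmbedding f _
      _ = ∫⁻ t in Icc 0 (l / 2), f t := setLIntegral_congr Ico_ae_eq_Icc
  rw [← hunion, lintegral_union measurableSet_Ioc hdisj, hleft, hright, two_mul]

lemma setLIntegral_Icc_div_rpow {s a r : ℝ} (hs : -1 < s) (ha : 0 ≤ a) (hr : 0 < r) :
    ∫⁻ t in Icc 0 a, ENNReal.ofReal ((t / r) ^ s) =
      ENNReal.ofReal (r * (a / r) ^ (s + 1) / (s + 1)) := by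
  have hint : IntegrableOn (fun t : ℝ => t ^ s / r ^ s) (Ioc 0 a) :=
    (intervalIntegral.intervalIntegrable_rpow' hs).1.div_const _
  calc ∫⁻ t in Icc 0 a, ENNReal.ofReal ((t / r) ^ s)
      = ∫⁻ t in Ioc 0 a, ENNReal.ofReal ((t / r) ^ s) := (setLIntegral_congr Ioc_ae_eq_Icc).symm
    _ = ∫⁻ t in Ioc 0 a, ENNReal.ofReal (t ^ s / r ^ s) :=
        setLIntegral_congr_fun measurableSet_Ioc fun t ht => by
          simp only [Real.div_rpow ht.1.le hr.le]
    _ = ENNReal.ofReal (∫ t in (0 : ℝ)..a, t ^ s / r ^ s) := by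
        rw [intervalIntegral.integral_of_le ha, ofReal_integral_eq_lintegral_ofReal hint]
        filter_upwards [ae_restrict_mem measurableSet_Ioc] with t ht
        exact div_nonneg (Real.rpow_nonneg ht.1.le s) (Real.rpow_nonneg hr.le s)
    _ = ENNReal.ofReal (r * (a / r) ^ (s + 1) / (s + 1)) := by
        rw [intervalIntegral.integral_div, integral_rpow (Or.inl hs),
          Real.zero_rpow (by linarith), sub_zero, Real.div_rpow ha hr.le,
          Real.rpow_add_one hr.ne']
        field_simp

lemma setLIntegral_Icc_min_div_rpow {s l r : ℝ} (hs : -1 < s) (hl : 0 ≤ l) (hr : 0 < r) :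
    ∫⁻ t in Icc 0 l, ENNReal.ofReal ((min t (l - t) / r) ^ s) =
      2 * ENNReal.ofReal (r * (l / r) ^ (s + 1) / ((s + 1) * 2 ^ (s + 1))) := by
  rw [← two_mul_setLIntegral_Icc_half (fun t => ENNReal.ofReal ((t / r) ^ s)) hl,
    setLIntegral_Icc_div_rpow hs (by positivity) hr, div_right_comm,
    Real.div_rpow (by positivity) zero_le_two]
  congr 2
  field_simp

lemma addHaar_closedBall_eq_ofReal {E : Type*} [NormedAddCommGroup E] [NormedSpace ℝ E]
    [FiniteDimensional ℝ E] [MeasurableSpace E] [BorelSpace E] (μ : Measure E)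
    [μ.IsAddHaarMeasure] (x : E) {r : ℝ} (hr : 0 ≤ r) :
    μ (closedBall x r) =
      ENNReal.ofReal (r ^ Module.finrank ℝ E * (μ (ball 0 1)).toReal) := by
  rw [Measure.addHaar_closedBall μ x hr, ENNReal.ofReal_mul (by positivity),
    ENNReal.ofReal_toReal measure_ball_lt_top.ne]

lemma exists_norm_eq_and_dist_eq_sub {E : Type*} [NormedAddCommGroup E] [NormedSpace ℝ E]
    [Nontrivial E] {w : E} {r : ℝ} (hw : ‖w‖ ≤ r) : ∃ v : E, ‖v‖ = r ∧ dist w v = r - ‖w‖ := by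
  have hr : 0 ≤ r := (norm_nonneg w).trans hw
  rcases eq_or_ne w 0 with rfl | hw0
  · obtain ⟨v, hv⟩ := exists_norm_eq E hr
    exact ⟨v, hv, by simp [hv]⟩
  · have hsmul : ‖(r / ‖w‖) • w‖ = r := by
      rw [norm_smul, norm_div, norm_norm, Real.norm_of_nonneg hr,
        div_mul_cancel₀ _ (norm_ne_zero_iff.2 hw0)]
    have hray : SameRay ℝ ((r / ‖w‖) • w) w :=
      SameRay.sameRay_nonneg_smul_left w (div_nonneg hr (norm_nonneg w))
    refine ⟨_, hsmul, ?_⟩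
    rw [dist_comm, dist_eq_norm, hray.norm_sub, hsmul, abs_of_nonneg (sub_nonneg.2 hw)]

lemma measurePreserving_isometryEquiv {n : ℕ}
    (φ : EuclideanSpace ℝ (Fin n) ≃ᵢ EuclideanSpace ℝ (Fin n)) : MeasurePreserving φ := by
  simpa only [EuclideanSpace.euclideanHausdorffMeasure_eq_volume] using
    φ.measurePreserving_euclideanHausdorffMeasure n

section Cylinder

variable {n : ℕ} [NeZero n]

lemma continuous_radial : Continuous (radial : EuclideanSpace ℝ (Fin n) → ℝ) := by
  unfold radial
  fun_prop

lemma isClosed_stdCylinder (l r : ℝ) :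
    IsClosed (stdCylinder l r : Set (EuclideanSpace ℝ (Fin n))) :=
  (isClosed_Icc.preimage (by fun_prop : Continuous fun z : EuclideanSpace ℝ (Fin n) => z 0)).inter
    (isClosed_le continuous_radial continuous_const)

end Cylinder

section TubeCoordinates

variable {m : ℕ} (φ : EuclideanSpace ℝ (Fin (m + 1)) ≃ᵢ EuclideanSpace ℝ (Fin (m + 1)))
  (t : ℝ) (w : EuclideanSpace ℝ (Fin m))

/-- The point with axial coordinate `t` and transversal coordinates `w` in the cylindrical
coordinate system which `φ` transports from the one around the first coordinate axis. -/
noncomputable def tubePoint : EuclideanSpace ℝ (Fin (m + 1)) :=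
  φ (WithLp.toLp 2 (Fin.cons t w : Fin (m + 1) → ℝ))

@[simp]
lemma symm_tubePoint_zero : φ.symm (tubePoint φ t w) 0 = t := by
  simp [tubePoint]

@[simp]
lemma radial_symm_tubePoint : radial (φ.symm (tubePoint φ t w)) = ‖w‖ := by
  have herase : (Finset.univ : Finset (Fin (m + 1))).erase 0 =
      Finset.univ.map (Fin.succEmb m) := by
    ext i
    simp [Fin.exists_succ_eq]
  rw [EuclideanSpace.norm_eq, radial, herase, Finset.sum_map]
  simp [tubePoint]

lemma exists_tubePoint_eq (z : EuclideanSpace ℝ (Fin (m + 1))) :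
    ∃ w, tubePoint φ (φ.symm z 0) w = z := by
  refine ⟨WithLp.toLp 2 (Fin.tail (φ.symm z)), ?_⟩
  rw [tubePoint, ← φ.eq_symm_apply]
  exact congrArg (WithLp.toLp 2) (Fin.cons_self_tail _)

lemma isometry_tubePoint : Isometry (tubePoint φ t) := by
  refine φ.isometry.comp (Isometry.of_dist_eq fun w w' => ?_)
  simp [EuclideanSpace.dist_eq, Fin.sum_univ_succ]

lemma image_stdSlice (r : ℝ) : φ '' stdSlice r t = tubePoint φ t '' closedBall 0 r := by
  rw [← φ.preimage_symm]
  ext z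
  constructor
  · rintro ⟨rfl, hr⟩
    obtain ⟨w, hw⟩ := exists_tubePoint_eq φ z
    refine ⟨w, ?_, hw⟩
    rwa [← hw, radial_symm_tubePoint, ← mem_closedBall_zero_iff] at hr
  · rintro ⟨w, hw, rfl⟩
    exact ⟨symm_tubePoint_zero φ t w, by simpa using hw⟩

lemma measurePreserving_tubePoint :
    MeasurePreserving (fun p : ℝ × EuclideanSpace ℝ (Fin m) => tubePoint φ p.1 p.2) := by
  have hcons : (fun p : ℝ × EuclideanSpace ℝ (Fin m) => tubePoint φ p.1 p.2) =
      φ ∘ WithLp.toLp 2 ∘ (MeasurableEquiv.piFinSuccAbove (fun _ : Fin (m + 1) => ℝ) 0).symm ∘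
        Prod.map id WithLp.ofLp := by
    funext p
    simp [tubePoint, MeasurableEquiv.piFinSuccAbove_symm_apply, Fin.insertNthEquiv]
  rw [hcons]
  exact (measurePreserving_isometryEquiv φ).comp <|
    (PiLp.volume_preserving_toLp (Fin (m + 1))).comp <|
    (volume_preserving_piFinSuccAbove (fun _ => ℝ) 0).symm.comp <|
    (MeasurePreserving.id volume).prod (PiLp.volume_preserving_ofLp (Fin m))

variable {φ} in
lemma setLIntegral_axial {S : Set (EuclideanSpace ℝ (Fin (m + 1)))} (hS : MeasurableSet S)
    {g : ℝ → ℝ≥0∞} (hg : Measurable g) :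
    ∫⁻ z in S, g (φ.symm z 0) = ∫⁻ t, g t * volume (tubePoint φ t ⁻¹' S) := by
  have haxial : Measurable fun z : EuclideanSpace ℝ (Fin (m + 1)) => φ.symm z 0 :=
    Continuous.measurable (by have := φ.symm.continuous; fun_prop)
  have hF : Measurable (S.indicator fun z => g (φ.symm z 0)) := (hg.comp haxial).indicator hS
  have hcoord := measurePreserving_tubePoint φ
  rw [← lintegral_indicator hS, ← hcoord.lintegral_comp hF, Measure.volume_eq_prod,
    lintegral_prod (fun p => S.indicator _ (tubePoint φ p.1 p.2))
      (hF.comp hcoord.measurable).aemeasurable]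
  refine lintegral_congr fun t => ?_
  have hslice (w : EuclideanSpace ℝ (Fin m)) :
      S.indicator (fun z => g (φ.symm z 0)) (tubePoint φ t w) =
        (tubePoint φ t ⁻¹' S).indicator (fun _ => g t) w := by
    by_cases hw : tubePoint φ t w ∈ S <;> simp [hw]
  simp only [hslice]
  exact lintegral_indicator_const ((isometry_tubePoint φ t).continuous.measurable hS) _

end TubeCoordinates

namespace IsEssentialTube

section Component

variable {n : ℕ} [NeZero n] {Ω ΩT : Set (EuclideanSpace ℝ (Fin n))}
  {φ : EuclideanSpace ℝ (Fin n) ≃ᵢ EuclideanSpace ℝ (Fin n)} {l r c : ℝ}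
  (hT : IsEssentialTube Ω φ l r c ΩT)

include hT

lemma subset : ΩT ⊆ φ '' stdCylinder l r ∩ Ω := by
  obtain ⟨p, -, rfl⟩ := hT.isComp
  exact connectedComponentIn_subset _ _

lemma axial_mem_Icc {z : EuclideanSpace ℝ (Fin n)} (hz : z ∈ ΩT) : φ.symm z 0 ∈ Icc 0 l := by
  obtain ⟨y, hy, rfl⟩ := (hT.subset hz).1
  simpa using hy.1

lemma radial_lt {z : EuclideanSpace ℝ (Fin n)} (hz : z ∈ ΩT) : radial (φ.symm z) < r := by
  obtain ⟨y, hy, rfl⟩ := (hT.subset hz).1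
  rw [φ.symm_apply_apply]
  refine hy.2.lt_of_ne fun hwall => ?_
  exact eq_empty_iff_forall_notMem.1 hT.wall_disjoint _ ⟨hz, mem_image_of_mem φ ⟨hy.1, hwall⟩⟩

lemma subset_of_isPreconnected {s : Set (EuclideanSpace ℝ (Fin n))} (hs : IsPreconnected s)
    (hsub : s ⊆ φ '' stdCylinder l r ∩ Ω) (hmeet : (s ∩ ΩT).Nonempty) : s ⊆ ΩT := by
  obtain ⟨p, -, rfl⟩ := hT.isComp
  obtain ⟨z, hzs, hz⟩ := hmeet
  rw [connectedComponentIn_eq hz]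
  exact hs.subset_connectedComponentIn hzs hsub

lemma closure_inter_eq : closure ΩT ∩ Ω = ΩT := by
  have hclosed : IsClosed (φ '' stdCylinder l r) :=
    φ.toHomeomorph.isClosedMap _ (isClosed_stdCylinder l r)
  have htube : closure ΩT ⊆ φ '' stdCylinder l r :=
    closure_minimal (hT.subset.trans inter_subset_left) hclosed
  rw [← inter_eq_left.2 htube, inter_assoc]
  obtain ⟨p, -, rfl⟩ := hT.isComp
  rw [closure_connectedComponentIn_inter]

lemma measurableSet (hΩ : IsOpen Ω) : MeasurableSet ΩT := by
  rw [← hT.closure_inter_eq]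
  exact isClosed_closure.measurableSet.inter hΩ.measurableSet

lemma isOpen_inter_axial (hΩ : IsOpen Ω) : IsOpen (ΩT ∩ {z | φ.symm z 0 ∈ Ioo 0 l}) := by
  set U := φ '' {y | y 0 ∈ Ioo 0 l ∧ radial y < r} ∩ Ω with hU
  have hUopen : IsOpen U := by
    refine (φ.toHomeomorph.isOpenMap _ ?_).inter hΩ
    exact (isOpen_Ioo.preimage (by fun_prop)).inter (isOpen_lt continuous_radial continuous_const)
  have hUsub : U ⊆ φ '' stdCylinder l r ∩ Ω :=
    inter_subset_inter_left Ω (image_mono fun y hy => ⟨Ioo_subset_Icc_self hy.1, hy.2.le⟩)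
  have heq : ΩT ∩ {z | φ.symm z 0 ∈ Ioo 0 l} = ΩT ∩ U := by
    ext z
    rw [hU, ← φ.preimage_symm]
    exact ⟨fun h => ⟨h.1, ⟨h.2, hT.radial_lt h.1⟩, (hT.subset h.1).2⟩, fun h => ⟨h.1, h.2.1.1⟩⟩
  rw [heq]
  obtain ⟨p, -, rfl⟩ := hT.isComp
  exact isOpen_connectedComponentIn_inter hUopen hUsub

lemma exists_exit_axial (hΩ : IsOpen Ω) {γ : ℝ → EuclideanSpace ℝ (Fin n)} {a b : ℝ}
    (hγ : ContinuousOn γ (Icc a b)) (hab : a ≤ b) (hγΩ : ∀ t ∈ Icc a b, γ t ∈ Ω)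
    (ha : γ a ∈ ΩT) (hb : γ b ∉ ΩT) :
    ∃ τ ∈ Icc a b, (∀ t ∈ Icc a τ, γ t ∈ ΩT) ∧ φ.symm (γ τ) 0 ∉ Ioo 0 l := by
  by_cases hinner : φ.symm (γ a) 0 ∈ Ioo 0 l
  · obtain ⟨τ, hτ, hτG, hbefore⟩ := exists_first_exit (hT.isOpen_inter_axial hΩ) hγ hab
      ⟨ha, hinner⟩ fun h => hb h.1
    rw [(hT.isOpen_inter_axial hΩ).frontier_eq] at hτG
    have hτT : γ τ ∈ ΩT := by
      rw [← hT.closure_inter_eq]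
      exact ⟨closure_mono inter_subset_left hτG.1, hγΩ τ hτ⟩
    refine ⟨τ, hτ, fun t ht => ?_, fun hτ' => hτG.2 ⟨hτT, hτ'⟩⟩
    rcases ht.2.eq_or_lt with rfl | hlt
    · exact hτT
    · exact (hbefore t ⟨ht.1, hlt⟩).1
  · refine ⟨a, ⟨le_rfl, hab⟩, fun t ht => ?_, hinner⟩
    rwa [le_antisymm ht.2 ht.1]

end Component

variable {m : ℕ} {Ω ΩT : Set (EuclideanSpace ℝ (Fin (m + 1)))}
  {φ : EuclideanSpace ℝ (Fin (m + 1)) ≃ᵢ EuclideanSpace ℝ (Fin (m + 1))} {l r c : ℝ}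
  (hT : IsEssentialTube Ω φ l r c ΩT)

include hT

lemma exists_notMem_dist_le [NeZero m] {z : EuclideanSpace ℝ (Fin (m + 1))} (hz : z ∈ ΩT) :
    ∃ p ∉ Ω, dist z p ≤ r := by
  by_contra! hfar
  set t := φ.symm z 0
  obtain ⟨w, hwz⟩ : ∃ w, tubePoint φ t w = z := exists_tubePoint_eq φ z
  have hwr : ‖w‖ ≤ r := by
    rw [← radial_symm_tubePoint φ t w, hwz]
    exact (hT.radial_lt hz).le
  obtain ⟨v, hv, hwv⟩ := exists_norm_eq_and_dist_eq_sub hwr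
  set disk := tubePoint φ t '' closedBall w (r - ‖w‖)
  have hsub : disk ⊆ φ '' stdCylinder l r ∩ Ω := by
    rw [← φ.preimage_symm]
    rintro _ ⟨u, hu, rfl⟩
    refine ⟨⟨?_, ?_⟩, by_contra fun huΩ => ?_⟩
    · rw [symm_tubePoint_zero]
      exact hT.axial_mem_Icc hz
    · rw [radial_symm_tubePoint]
      linarith [norm_le_norm_add_norm_sub' u w, (mem_closedBall_iff_norm.1 hu)]
    · have hdist := hfar _ huΩ
      rw [← hwz, (isometry_tubePoint φ t).dist_eq, dist_comm] at hdist
      linarith [mem_closedBall.1 hu, norm_nonneg w]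
  have hconn : IsPreconnected disk :=
    (convex_closedBall w _).isPreconnected.image _
      (isometry_tubePoint φ t).continuous.continuousOn
  have hvT : tubePoint φ t v ∈ ΩT :=
    hT.subset_of_isPreconnected hconn hsub
      ⟨z, ⟨w, mem_closedBall_self (sub_nonneg.2 hwr), hwz⟩, hz⟩
      (mem_image_of_mem _ (by rw [mem_closedBall, dist_comm, hwv]))
  exact (hT.radial_lt hvT).ne (by rw [radial_symm_tubePoint, hv])

lemma exists_mem_frontier_dist_le [NeZero m] {z : EuclideanSpace ℝ (Fin (m + 1))} (hz : z ∈ ΩT) :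
    ∃ q ∈ frontier Ω, dist z q ≤ r := by
  obtain ⟨p, hp, hzp⟩ := hT.exists_notMem_dist_le hz
  obtain ⟨q, hq, hzq⟩ := exists_mem_frontier_infDist_compl_eq_dist (hT.subset hz).2
    fun hΩ => hp (hΩ ▸ mem_univ p)
  exact ⟨q, hq, hzq ▸ (infDist_le_dist_of_mem hp).trans hzp⟩

lemma min_div_le_qhDist [NeZero m] (hΩ : IsOpen Ω) (hconn : IsPreconnected Ω)
    {z z₀ : EuclideanSpace ℝ (Fin (m + 1))} (hz : z ∈ ΩT) (hz₀ : z₀ ∈ Ω) (hz₀T : z₀ ∉ ΩT) :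
    min (φ.symm z 0) (l - φ.symm z 0) / r ≤ qhDist Ω z z₀ := by
  obtain ⟨γ₀, hγ₀⟩ :=
    lipschitzJoinedIn_of_isOpen_of_isPreconnected hΩ hconn (hT.subset hz).2 hz₀
  refine le_csInf ⟨_, γ₀, hγ₀.1, hγ₀.2.1, hγ₀.2.2.1, hγ₀.2.2.2, rfl⟩ ?_
  rintro _ ⟨γ, ⟨K, hK⟩, rfl, rfl, hγΩ, rfl⟩
  obtain ⟨τ, hτ, hτT, hexit⟩ :=
    hT.exists_exit_axial hΩ hK.continuous.continuousOn zero_le_one hγΩ hz hz₀T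
  have hfrontier : (frontier Ω).Nonempty :=
    (hT.exists_mem_frontier_dist_le hz).imp fun _ => And.left
  have hle : ∀ t ∈ Icc 0 τ, infDist (γ t) (frontier Ω) ≤ r := fun t ht => by
    obtain ⟨q, hq, hγq⟩ := hT.exists_mem_frontier_dist_le (hτT t ht)
    exact (infDist_le_dist_of_mem hq).trans hγq
  have hpos : ∀ t ∈ Icc (0 : ℝ) 1, 0 < infDist (γ t) (frontier Ω) := fun t ht => by
    rw [← isClosed_frontier.notMem_iff_infDist_pos hfrontier, hΩ.frontier_eq]
    exact fun h => h.2 (hγΩ t ht)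
  have hmin : min (φ.symm (γ 0) 0) (l - φ.symm (γ 0) 0) ≤ dist (γ 0) (γ τ) := by
    have hcoord : |φ.symm (γ 0) 0 - φ.symm (γ τ) 0| ≤ dist (γ 0) (γ τ) := by
      rw [← φ.symm.dist_eq, dist_eq_norm]
      exact PiLp.norm_apply_le (φ.symm (γ 0) - φ.symm (γ τ)) 0
    have hends : φ.symm (γ τ) 0 ≤ 0 ∨ l ≤ φ.symm (γ τ) 0 := by
      simpa only [mem_Ioo, not_and_or, not_lt] using hexit
    rcases hends with h0 | hl
    · exact (min_le_left _ _).trans (by linarith [le_abs_self (φ.symm (γ 0) 0 - φ.symm (γ τ) 0)])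
    · exact (min_le_right _ _).trans (by linarith [neg_le_abs (φ.symm (γ 0) 0 - φ.symm (γ τ) 0)])
  calc min (φ.symm (γ 0) 0) (l - φ.symm (γ 0) 0) / r ≤ dist (γ 0) (γ τ) / r := by
        gcongr
        exact hT.r_pos.le
    _ ≤ ∫ t in (0 : ℝ)..1, ‖deriv γ t‖ / infDist (γ t) (frontier Ω) :=
        dist_div_le_integral_norm_deriv_div hK hτ
          ((continuous_infDist_pt _).comp hK.continuous).continuousOn hpos hle

lemma le_volume_slice {t : ℝ} (ht : t ∈ Icc 0 l) :
    ENNReal.ofReal c * volume (closedBall (0 : EuclideanSpace ℝ (Fin m)) r) ≤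
      volume (tubePoint φ t ⁻¹' ΩT) := by
  have hiso := isometry_tubePoint φ t
  have hvol (A : Set (EuclideanSpace ℝ (Fin m))) : μHE[m] (tubePoint φ t '' A) = volume A := by
    rw [hiso.euclideanHausdorffMeasure_image, EuclideanSpace.euclideanHausdorffMeasure_eq_volume]
  calc ENNReal.ofReal c * volume (closedBall (0 : EuclideanSpace ℝ (Fin m)) r)
      = ENNReal.ofReal c * μHE[m] (φ '' stdSlice r t) := by rw [image_stdSlice, hvol]
    _ ≤ μHE[m] (ΩT ∩ φ '' stdSlice r t) := by
        have hslice := hT.slice_meas t ht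
        rw [Nat.cast_add_one, add_sub_cancel_right] at hslice
        rw [Measure.euclideanHausdorffMeasure_def, Measure.smul_apply, Measure.smul_apply,
          mul_smul_comm]
        gcongr
    _ ≤ μHE[m] (tubePoint φ t '' (tubePoint φ t ⁻¹' ΩT)) := by
        rw [image_preimage_eq_inter_range, image_stdSlice]
        exact measure_mono (inter_subset_inter_right _ (image_subset_range _ _))
    _ = volume (tubePoint φ t ⁻¹' ΩT) := hvol _

lemma mul_setLIntegral_le (hΩ : IsOpen Ω) {g : ℝ → ℝ≥0∞} (hg : Measurable g) :
    ENNReal.ofReal c * volume (closedBall (0 : EuclideanSpace ℝ (Fin m)) r) *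
      ∫⁻ t in Icc 0 l, g t ≤ ∫⁻ z in ΩT, g (φ.symm z 0) := by
  rw [setLIntegral_axial (hT.measurableSet hΩ) hg, ← lintegral_const_mul _ hg]
  calc ∫⁻ t in Icc 0 l,
        ENNReal.ofReal c * volume (closedBall (0 : EuclideanSpace ℝ (Fin m)) r) * g t
      ≤ ∫⁻ t in Icc 0 l, g t * volume (tubePoint φ t ⁻¹' ΩT) := by
        refine setLIntegral_mono' measurableSet_Icc fun t ht => ?_
        rw [mul_comm]
        gcongr
        exact hT.le_volume_slice ht
    _ ≤ ∫⁻ t, g t * volume (tubePoint φ t ⁻¹' ΩT) := setLIntegral_le_lintegral _ _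

lemma two_mul_le_setLIntegral_min_div_rpow (hΩ : IsOpen Ω) {s : ℝ} (hs : -1 < s) :
    2 * ENNReal.ofReal ((volume (ball (0 : EuclideanSpace ℝ (Fin m)) 1)).toReal
        / ((s + 1) * 2 ^ (s + 1)) * c * r ^ (m + 1) * (l / r) ^ (s + 1)) ≤
      ∫⁻ z in ΩT, ENNReal.ofReal ((min (φ.symm z 0) (l - φ.symm z 0) / r) ^ s) := by
  have hc := hT.c_pos.le
  have hr := hT.r_pos.le
  refine Eq.trans_le ?_ (hT.mul_setLIntegral_le hΩ
    (g := fun t => ENNReal.ofReal ((min t (l - t) / r) ^ s)) (by fun_prop))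
  rw [setLIntegral_Icc_min_div_rpow hs hT.l_pos.le hT.r_pos, mul_left_comm,
    addHaar_closedBall_eq_ofReal _ _ hr, finrank_euclideanSpace_fin, ← ENNReal.ofReal_mul hc,
    ← ENNReal.ofReal_mul (by positivity)]
  congr 2
  ring

end IsEssentialTube

theorem tube_lower_bound_general {n : ℕ} [NeZero n] (hn : 2 ≤ n) {s : ℝ} (hs : 0 ≤ s)
    {Ω : Set (EuclideanSpace ℝ (Fin n))} (hΩ : IsOpen Ω) (hconn : IsPreconnected Ω)
    {φ : EuclideanSpace ℝ (Fin n) ≃ᵢ EuclideanSpace ℝ (Fin n)} {l r c : ℝ}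
    {ΩT : Set (EuclideanSpace ℝ (Fin n))} (hT : IsEssentialTube Ω φ l r c ΩT)
    {z₀ : EuclideanSpace ℝ (Fin n)} (hz₀ : z₀ ∈ Ω) (hz₀T : z₀ ∉ ΩT) :
    2 * ENNReal.ofReal
        ((volume (ball (0 : EuclideanSpace ℝ (Fin (n - 1))) 1)).toReal
          / ((s + 1) * 2 ^ (s + 1)) * c * r ^ n * (l / r) ^ (s + 1)) ≤
      ∫⁻ z in ΩT, ENNReal.ofReal (qhDist Ω z z₀ ^ s) := by
  obtain ⟨m, rfl⟩ := Nat.exists_eq_add_of_le' (one_le_two.trans hn)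
  have : NeZero m := ⟨by lia⟩
  refine (hT.two_mul_le_setLIntegral_min_div_rpow hΩ (by linarith)).trans
    (setLIntegral_mono' (hT.measurableSet hΩ) fun z hz => ?_)
  have hmin : 0 ≤ min (φ.symm z 0) (l - φ.symm z 0) :=
    le_min (hT.axial_mem_Icc hz).1 (sub_nonneg.2 (hT.axial_mem_Icc hz).2)
  gcongr
  · exact div_nonneg hmin hT.r_pos.le
  · exact hT.min_div_le_qhDist hΩ hconn hz hz₀ hz₀T

/-- Lower bound on the `L^s`-integral of the quasihyperbolic distance
over the component `Ω_T` of an essential tube. -/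
theorem tube_lower_bound {n : ℕ} [NeZero n] (hn : 2 ≤ n) (s : ℝ) (hs : 1 ≤ s)
    (Ω : Set (EuclideanSpace ℝ (Fin n))) (hΩop : IsOpen Ω) (hΩconn : IsConnected Ω)
    (φ : EuclideanSpace ℝ (Fin n) ≃ᵢ EuclideanSpace ℝ (Fin n)) (l r c : ℝ)
    (ΩT : Set (EuclideanSpace ℝ (Fin n))) (hT : IsEssentialTube Ω φ l r c ΩT)
    (z₀ : EuclideanSpace ℝ (Fin n)) (hz₀ : z₀ ∈ Ω) (hz₀T : z₀ ∉ ΩT) :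
    ENNReal.ofReal
        ((volume (Metric.ball (0 : EuclideanSpace ℝ (Fin (n-1))) 1)).toReal
          / ((s+1) * 2 ^ (s+1)) * c * r ^ n * (l / r) ^ (s+1)) ≤
      ∫⁻ z in ΩT, ENNReal.ofReal (qhDist Ω z z₀ ^ s) :=
  (le_mul_of_one_le_left' one_le_two).trans
    (tube_lower_bound_general hn (zero_le_one.trans hs) hΩop hΩconn.isPreconnected hT hz₀ hz₀T)
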